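/- Let V be a vertex operator algebra and W any weak V-module. Then the full dual space W* is a module for the Lie algebra g(V) = (V ⊗ ℂ[t,t^{−1}]) / im(L(−1)⊗1 + 1⊗d/dt), where v(n) acts on W* as the operator v*_n (the coefficient of x^{−n−1} in Y*(v,x)). -/

import Mathlib

noncomputable section

/-- The generalized binomial coefficient `C(m, i)` for `m ∈ ℤ`, `i ∈ ℕ`,
as a complex number: `m(m-1)⋯(m-i+1)/i!`. -/
def cchoose (m : ℤ) (i : ℕ) : ℂ :=
  (∏ j ∈ Finset.range i, ((m : ℂ) - (j : ℂ))) / (Nat.factorial i : ℂ)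

/-- A vertex operator algebra `V = ⊕ₙ V₍ₙ₎` over `ℂ`.  The vertex operator map is
recorded through its modes `op u n v = uₙ v` (so `Y(u,x)v = Σₙ uₙv x^{-n-1}`), with
vacuum `one`, conformal vector `omega` (with `L(k) = ω_{k+1}`), central charge `cc`,
weight grading `wtSpace` with projections `proj`.  The Jacobi identity is recorded in
the equivalent form of the Borcherds identity on modes. -/
structure VOA where
  carrier : Type
  [grp : AddCommGroup carrier]
  [mdl : Module ℂ carrier]
  op : carrier → ℤ → carrier → carrier
  one : carrier
  omega : carrier
  wtSpace : ℤ → Submodule ℂ carrier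
  proj : ℤ → carrier → carrier
  cc : ℂ
  op_linear_left : ∀ (n : ℤ) (w : carrier), IsLinearMap ℂ fun u => op u n w
  op_linear_right : ∀ (u : carrier) (n : ℤ), IsLinearMap ℂ (op u n)
  trunc : ∀ u v : carrier, ∃ N : ℤ, ∀ n : ℤ, N ≤ n → op u n v = 0
  one_op : ∀ (n : ℤ) (v : carrier), op one n v = if n = -1 then v else 0
  create_nonneg : ∀ (v : carrier) (n : ℤ), 0 ≤ n → op v n one = 0
  create : ∀ v : carrier, op v (-1) one = v
  borcherds : ∀ (u v w : carrier) (l m n : ℤ),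
    (∑ᶠ i : ℕ, cchoose m i • op (op u (l + (i : ℤ)) v) (m + n - (i : ℤ)) w)
      = ∑ᶠ i : ℕ, ((-1 : ℂ) ^ i * cchoose l i) •
          (op u (l + m - (i : ℤ)) (op v (n + (i : ℤ)) w)
            - ((-1 : ℂ) ^ l) • op v (l + n - (i : ℤ)) (op u (m + (i : ℤ)) w))
  proj_linear : ∀ n : ℤ, IsLinearMap ℂ (proj n)
  proj_mem : ∀ (n : ℤ) (v : carrier), proj n v ∈ wtSpace n
  proj_eq : ∀ n : ℤ, ∀ v ∈ wtSpace n, proj n v = v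
  proj_ne : ∀ m n : ℤ, m ≠ n → ∀ v ∈ wtSpace m, proj n v = 0
  proj_finite : ∀ v : carrier, (Function.support fun n => proj n v).Finite
  proj_sum : ∀ v : carrier, (∑ᶠ n : ℤ, proj n v) = v
  fd : ∀ n : ℤ, FiniteDimensional ℂ (wtSpace n)
  lower_trunc : ∃ N : ℤ, ∀ n : ℤ, n < N → wtSpace n = ⊥
  one_wt : one ∈ wtSpace 0
  omega_wt : omega ∈ wtSpace 2
  op_wt : ∀ k m n : ℤ, ∀ u ∈ wtSpace k, ∀ v ∈ wtSpace m, op u n v ∈ wtSpace (k + m - n - 1)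
  L_zero : ∀ n : ℤ, ∀ v ∈ wtSpace n, op omega 1 v = (n : ℂ) • v
  L_neg_one : ∀ (u : carrier) (n : ℤ) (w : carrier),
    op (op omega 0 u) n w = (-(n : ℂ)) • op u (n - 1) w
  virasoro : ∀ (m n : ℤ) (v : carrier),
    op omega (m + 1) (op omega (n + 1) v) - op omega (n + 1) (op omega (m + 1) v)
      = ((m : ℂ) - (n : ℂ)) • op omega (m + n + 1) v
        + (if m + n = 0 then (((m : ℂ) ^ 3 - (m : ℂ)) / 12) * cc else 0) • v

attribute [instance] VOA.grp VOA.mdl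

namespace VOA

variable (V : VOA)

/-- The Virasoro operator `L(k) = ω_{k+1}`. -/
def L (k : ℤ) (v : V.carrier) : V.carrier := V.op V.omega (k + 1) v

/-- The positive-weight part `V₊ = ⊕_{n ≥ 1} V₍ₙ₎`. -/
def pos : Submodule ℂ V.carrier := ⨆ (n : ℤ) (_ : 1 ≤ n), V.wtSpace n

/-- Zhu's subspace `C₂(V) = span{u₋₂v : u, v ∈ V}`. -/
def C2 : Submodule ℂ V.carrier :=
  Submodule.span ℂ {x : V.carrier | ∃ u v : V.carrier, x = V.op u (-2) v}

/-- The subspace `C₁(V) = span(v₋₁V₊ (v ∈ V₊) together with L(-1)V)`. -/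
def C1 : Submodule ℂ V.carrier :=
  Submodule.span ℂ
    ({x : V.carrier | ∃ u ∈ V.pos, ∃ v ∈ V.pos, x = V.op u (-1) v}
      ∪ {x : V.carrier | ∃ v : V.carrier, x = V.op V.omega 0 v})

/-- Iterated application of modes: `iterApply [(u¹,n₁),…,(uʳ,n_r)] w = u¹_{n₁} ⋯ uʳ_{n_r} w`. -/
def iterApply : List (V.carrier × ℤ) → V.carrier → V.carrier
  | [], w => w
  | p :: l, w => V.op p.1 p.2 (iterApply l w)

/-- `U ⊆ V` generates `V` as a vertex operator algebra:  `V` is linearly spanned by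
the elements `u¹_{n₁} ⋯ uʳ_{n_r} 1` with `uⁱ ∈ U`, `n_i ∈ ℤ`. -/
def generates (U : Set V.carrier) : Prop :=
  Submodule.span ℂ {x : V.carrier | ∃ l : List (V.carrier × ℤ),
    (∀ p ∈ l, p.1 ∈ U) ∧ x = V.iterApply l V.one} = ⊤

/-- `V` is finitely generated as a vertex operator algebra. -/
def FinitelyGenerated : Prop := ∃ S : Finset V.carrier, V.generates ↑S

end VOA

/-- A weak `V`-module: all axioms of a module (truncation, vacuum, Jacobi identity in
Borcherds form) except those involving gradings. -/
structure WeakModule (V : VOA) where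
  carrier : Type
  [grp : AddCommGroup carrier]
  [mdl : Module ℂ carrier]
  op : V.carrier → ℤ → carrier → carrier
  op_linear_left : ∀ (n : ℤ) (w : carrier), IsLinearMap ℂ fun u => op u n w
  op_linear_right : ∀ (u : V.carrier) (n : ℤ), IsLinearMap ℂ (op u n)
  trunc : ∀ (u : V.carrier) (w : carrier), ∃ N : ℤ, ∀ n : ℤ, N ≤ n → op u n w = 0
  one_op : ∀ (n : ℤ) (w : carrier), op V.one n w = if n = -1 then w else 0
  borcherds : ∀ (u v : V.carrier) (w : carrier) (l m n : ℤ),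
    (∑ᶠ i : ℕ, cchoose m i • op (V.op u (l + (i : ℤ)) v) (m + n - (i : ℤ)) w)
      = ∑ᶠ i : ℕ, ((-1 : ℂ) ^ i * cchoose l i) •
          (op u (l + m - (i : ℤ)) (op v (n + (i : ℤ)) w)
            - ((-1 : ℂ) ^ l) • op v (l + n - (i : ℤ)) (op u (m + (i : ℤ)) w))

attribute [instance] WeakModule.grp WeakModule.mdl

namespace WeakModule

variable {V : VOA} (W : WeakModule V)

/-- `L(0)` acting on a weak module, as a linear map. -/
def L0 : W.carrier →ₗ[ℂ] W.carrier := IsLinearMap.mk' _ (W.op_linear_right V.omega 1)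

/-- The `L(0)`-eigenspace of eigenvalue `h`. -/
def eig (h : ℂ) : Submodule ℂ W.carrier :=
  LinearMap.ker (W.L0 - h • (LinearMap.id : W.carrier →ₗ[ℂ] W.carrier))

/-- The coefficient `v*ₙ` of the adjoint vertex operator
`⟨Y*(v,x)α, w⟩ = ⟨α, Y(e^{xL(1)}(-x^{-2})^{L(0)}v, x^{-1})w⟩` acting on the full dual
space: for `v` homogeneous of weight `h`,
`(v*ₙ α)(w) = (-1)^h Σ_{i≥0} (1/i!) α((L(1)^i v)_{2h-n-i-2} w)`, extended to general
`v` via the weight-space projections. -/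
def dmode (v : V.carrier) (n : ℤ) (α : W.carrier → ℂ) (w : W.carrier) : ℂ :=
  ∑ᶠ h : ℤ, ∑ᶠ i : ℕ,
    ((-1 : ℂ) ^ h / (Nat.factorial i : ℂ)) *
      α (W.op ((V.L 1)^[i] (V.proj h v)) (2 * h - n - (i : ℤ) - 2) w)

/-- `D(W) ⊆ W*`: the linear functionals `α` on `W` such that for every `v ∈ V`,
`Y*(v,x)α ∈ W*((x))`, i.e. `v*ₙ α = 0` for `n` sufficiently large. -/
def DW : Set (W.carrier → ℂ) :=
  {α | IsLinearMap ℂ α ∧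
    ∀ v : V.carrier, ∃ N : ℤ, ∀ n : ℤ, N ≤ n → ∀ w : W.carrier, W.dmode v n α w = 0}

/-- A subspace stable under all modes of all vertex operators, i.e. a `V`-submodule. -/
def IsStable (S : Submodule ℂ W.carrier) : Prop :=
  ∀ (v : V.carrier) (n : ℤ), ∀ m ∈ S, W.op v n m ∈ S

/-- An irreducible (nonzero, no proper nonzero stable subspaces) `V`-submodule. -/
def IsIrreducibleSub (S : Submodule ℂ W.carrier) : Prop :=
  S ≠ ⊥ ∧ W.IsStable S ∧
    ∀ T : Submodule ℂ W.carrier, W.IsStable T → T ≤ S → T = ⊥ ∨ T = S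

/-- A stable subspace which is an ordinary module: `L(0)` acts semisimply on it with
finite-dimensional eigenspaces, and for each `h` the eigenvalues `h + m` do not occur
for `m` a sufficiently negative integer. -/
def IsOrdinarySub (S : Submodule ℂ W.carrier) : Prop :=
  S ≤ (⨆ h : ℂ, W.eig h ⊓ S) ∧ (∀ h : ℂ, FiniteDimensional ℂ ↥(W.eig h ⊓ S)) ∧
    ∀ h : ℂ, ∃ N : ℤ, ∀ m : ℤ, m ≤ N → W.eig (h + (m : ℂ)) ⊓ S = ⊥

/-- The weak module `W` is irreducible. -/
def IsIrreducible : Prop :=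
  (⊥ : Submodule ℂ W.carrier) ≠ ⊤ ∧
    ∀ S : Submodule ℂ W.carrier, W.IsStable S → S = ⊥ ∨ S = ⊤

/-- `Cₙ(W) = span{v₋ₙw : v ∈ V, w ∈ W}`. -/
def Cn (n : ℤ) : Submodule ℂ W.carrier :=
  Submodule.span ℂ {x : W.carrier | ∃ (v : V.carrier) (w : W.carrier), x = W.op v (-n) w}

/-- `B(W) = span(u₋₁W (u ∈ V₊) together with v₀W (v homogeneous, wt v ≥ 2))`. -/
def BW : Submodule ℂ W.carrier :=
  Submodule.span ℂ
    ({x : W.carrier | ∃ v ∈ V.pos, ∃ w : W.carrier, x = W.op v (-1) w}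
      ∪ {x : W.carrier | ∃ k : ℤ, 2 ≤ k ∧ ∃ v ∈ V.wtSpace k, ∃ w : W.carrier, x = W.op v 0 w})

/-- Zhu's subspace `O(W) = span{Σ_{i≥0} C(wt v, i) v_{i-2} w}` so that `A(W) = W/O(W)`. -/
def OW : Submodule ℂ W.carrier :=
  Submodule.span ℂ
    {x : W.carrier | ∃ (k : ℤ) (v : V.carrier), v ∈ V.wtSpace k ∧
      ∃ w : W.carrier, x = ∑ᶠ i : ℕ, cchoose k i • W.op v ((i : ℤ) - 2) w}

/-- A subspace `T ⊇ O(W)` of `W` is closed under the Frenkel–Zhu left and right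
`A(V)`-actions `v * w = Σᵢ C(wt v, i) v_{i-1} w` and `w * v = Σᵢ C(wt v - 1, i) v_{i-1} w`;
for `T ⊇ O(W)` this expresses that `T/O(W)` is an `A(V)`-sub-bimodule of `A(W)`. -/
def BimoduleClosed (T : Submodule ℂ W.carrier) : Prop :=
  ∀ k : ℤ, ∀ v ∈ V.wtSpace k, ∀ w ∈ T,
    (∑ᶠ i : ℕ, cchoose k i • W.op v ((i : ℤ) - 1) w) ∈ T ∧
    (∑ᶠ i : ℕ, cchoose (k - 1) i • W.op v ((i : ℤ) - 1) w) ∈ T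

/-- Equivalence (isomorphism) of weak modules. -/
def Equiv (M N : WeakModule V) : Prop :=
  ∃ e : M.carrier ≃ₗ[ℂ] N.carrier,
    ∀ (v : V.carrier) (n : ℤ) (w : M.carrier), e (M.op v n w) = N.op v n (e w)

end WeakModule

/-- `V` is of class 𝒜: `L(0)` acts semisimply on every weak `V`-module. -/
def VOA.classA (V : VOA) : Prop :=
  ∀ M : WeakModule V, (⨆ h : ℂ, M.eig h) = ⊤

/-- `V` is regular: every weak `V`-module is a direct sum of irreducible ordinary
`V`-modules. -/
def VOA.regular (V : VOA) : Prop :=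
  ∀ M : WeakModule V, ∃ (ι : Type) (S : ι → Submodule ℂ M.carrier),
    (∀ i, M.IsIrreducibleSub (S i) ∧ M.IsOrdinarySub (S i)) ∧
    (∀ i, Disjoint (S i) (⨆ (j : ι) (_ : j ≠ i), S j)) ∧ (⨆ i, S i) = ⊤

/-- A generalized `V`-module: a weak module with a semisimple `L(0)`-action, graded by
the `L(0)`-eigenvalues, with weight-space projections `projW`. -/
structure GenModule (V : VOA) extends WeakModule V where
  wt : ℂ → Submodule ℂ carrier
  projW : ℂ → carrier → carrier
  projW_linear : ∀ h : ℂ, IsLinearMap ℂ (projW h)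
  projW_mem : ∀ (h : ℂ) (w : carrier), projW h w ∈ wt h
  projW_eq : ∀ h : ℂ, ∀ w ∈ wt h, projW h w = w
  projW_ne : ∀ g h : ℂ, g ≠ h → ∀ w ∈ wt g, projW h w = 0
  projW_finite : ∀ w : carrier, (Function.support fun h => projW h w).Finite
  projW_sum : ∀ w : carrier, (∑ᶠ h : ℂ, projW h w) = w
  wt_L0 : ∀ h : ℂ, ∀ w ∈ wt h, op V.omega 1 w = h • w
  wt_op : ∀ k : ℤ, ∀ v ∈ V.wtSpace k, ∀ (h : ℂ) (n : ℤ), ∀ w ∈ wt h,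
    op v n w ∈ wt (h + (k : ℂ) - (n : ℂ) - 1)

/-- An ordinary `V`-module: a generalized module whose weight spaces are
finite-dimensional and whose weights are truncated from below in each coset `h + ℤ`. -/
structure OrdModule (V : VOA) extends GenModule V where
  wt_fd : ∀ h : ℂ, FiniteDimensional ℂ ↥(wt h)
  wt_lower : ∀ h : ℂ, ∃ N : ℤ, ∀ m : ℤ, m ≤ N → wt (h + (m : ℂ)) = ⊥

namespace GenModule

variable {V : VOA} (W : GenModule V)

/-- `W₊ = ⊕_{Re h > 0} W₍ₕ₎`. -/
def posW : Submodule ℂ W.carrier := ⨆ (h : ℂ) (_ : 0 < h.re), W.wt h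

/-- `C₁(W) = span(v₋₁W₊ (v ∈ V₊) together with L(-1)W)`. -/
def C1W : Submodule ℂ W.carrier :=
  Submodule.span ℂ
    ({x : W.carrier | ∃ v ∈ V.pos, ∃ w ∈ W.posW, x = W.op v (-1) w}
      ∪ {x : W.carrier | ∃ w : W.carrier, x = W.op V.omega 0 w})

/-- The restricted dual `W' = ⊕ₕ W₍ₕ₎* ⊆ W*`: the linear functionals vanishing on all
but finitely many weight spaces. -/
def restrictedDual : Set (W.carrier → ℂ) :=
  {α | IsLinearMap ℂ α ∧ {h : ℂ | ∃ w ∈ W.wt h, α w ≠ 0}.Finite}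

end GenModule

/-- `D(W)⁰`: the sum of the `L(0)`-eigenspaces of the weak module `D(W) ⊆ W*`, where
`L*(0) = ω*₁` acts on `α ∈ W*` by `(L*(0)α)(w) = α(L(0)w)`. -/
def OrdModule.DW0 {V : VOA} (W : OrdModule V) : Set (W.carrier → ℂ) :=
  {α | ∃ (S : Finset ℂ) (f : ℂ → (W.carrier → ℂ)),
    (∀ h ∈ S, f h ∈ W.toWeakModule.DW ∧
      ∀ w : W.carrier, f h (W.op V.omega 1 w) = h * f h w) ∧
    α = ∑ h ∈ S, f h}

/-- An ℕ-gradable weak `V`-module: a weak module with an ℕ-grading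
`W = ⊕_{n∈ℕ} W(n)` with `v_m W(n) ⊆ W(wt v + n - m - 1)` (graded pieces of negative
index are zero). -/
structure NGradedModule (V : VOA) extends WeakModule V where
  gr : ℤ → Submodule ℂ carrier
  gr_neg : ∀ n : ℤ, n < 0 → gr n = ⊥
  gr_sup : (⨆ n : ℤ, gr n) = ⊤
  gr_indep : ∀ n : ℤ, Disjoint (gr n) (⨆ (m : ℤ) (_ : m ≠ n), gr m)
  gr_op : ∀ k : ℤ, ∀ v ∈ V.wtSpace k, ∀ m n : ℤ, ∀ w ∈ gr n,
    op v m w ∈ gr (k + n - m - 1)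

/-- An intertwining operator of type `(W₃; W₁ W₂)` in the sense of
Frenkel–Huang–Lepowsky, recorded through its complex-indexed modes
`I w₁ h w₂ = (w₁)ₕ w₂` (so `Y(w₁,x)w₂ = Σ_{h∈ℂ} (w₁)ₕ w₂ x^{-h-1}`):
linearity, truncation, the `L(-1)`-derivative property, and the Jacobi identity in
component (Borcherds) form. -/
def IsIntertwiner {V : VOA} (W1 W2 W3 : OrdModule V)
    (I : W1.carrier → ℂ → W2.carrier → W3.carrier) : Prop :=
  (∀ (h : ℂ) (w2 : W2.carrier), IsLinearMap ℂ fun w1 => I w1 h w2) ∧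
  (∀ (w1 : W1.carrier) (h : ℂ), IsLinearMap ℂ (I w1 h)) ∧
  (∀ (w1 : W1.carrier) (w2 : W2.carrier) (h : ℂ),
    ∃ N : ℤ, ∀ n : ℤ, N ≤ n → I w1 (h + (n : ℂ)) w2 = 0) ∧
  (∀ (w1 : W1.carrier) (h : ℂ) (w2 : W2.carrier),
    I (W1.op V.omega 0 w1) h w2 = (-h) • I w1 (h - 1) w2) ∧
  (∀ (u : V.carrier) (w1 : W1.carrier) (w2 : W2.carrier) (l m : ℤ) (h : ℂ),
    (∑ᶠ i : ℕ, cchoose m i • I (W1.op u (l + (i : ℤ)) w1) ((m : ℂ) + h - (i : ℂ)) w2)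
      = ∑ᶠ i : ℕ, ((-1 : ℂ) ^ i * cchoose l i) •
          (W3.op u (l + m - (i : ℤ)) (I w1 (h + (i : ℂ)) w2)
            - ((-1 : ℂ) ^ l) • I w1 ((l : ℂ) + h - (i : ℂ)) (W2.op u (m + (i : ℤ)) w2)))

/-- The fusion rule `dim I(W₃; W₁W₂)` is finite: the space of intertwining operators of
the indicated type is finite-dimensional. -/
def FusionFinite {V : VOA} (W1 W2 W3 : OrdModule V) : Prop :=
  FiniteDimensional ℂ
    ↥(Submodule.span ℂ {I : W1.carrier → ℂ → W2.carrier → W3.carrier |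
        IsIntertwiner W1 W2 W3 I})

end

/-!
By definition `v*_n` is the transpose of an operator `T_n(v)` on `W`, the coefficient of `x^{-n-1}`
in `Y_W(e^{xL(1)}(-x^{-2})^{L(0)}v, x^{-1})`, so it suffices that `v(n) ↦ T_n(v)` is a well-defined
anti-representation of `g(V)` on `W`.

Write `D_c = L(1)^c / c!`. The relation `T_n(L(-1)v) = -n T_{n-1}(v)` is a telescoping consequence
of `D_{c+1} L(-1)v = L(-1) D_{c+1} v + (2h - c) D_c v` for `v` of weight `h`. For the bracket,
`e^{xL(1)} u_i e^{-xL(1)} = Σ_{a,s} C(2k-a-i-2, s) (D_a u)_{i+s} x^{a+s}` for `u` of weight `k`;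
weighting by `(-1)^i C(m, i)` and summing over `i` collapses the binomials, by Chu–Vandermonde, to
those that appear when the commutator formula is applied to `[T_m(u), T_n(v)]`.
-/

open Finset

section Binomial

lemma cchoose_eq_intCast_choose (m : ℤ) (i : ℕ) : cchoose m i = (Ring.choose m i : ℤ) := by
  have h : ∏ j ∈ range i, (m - (j : ℤ)) = i.factorial * Ring.choose m i := by
    rw [← descPochhammer_eval_eq_prod_range, Polynomial.eval_eq_smeval,
      Ring.descPochhammer_eq_factorial_smul_choose, nsmul_eq_mul]
  rw [cchoose, div_eq_iff (Nat.cast_ne_zero.2 i.factorial_ne_zero), mul_comm]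
  exact_mod_cast h

lemma cchoose_zero_right (m : ℤ) : cchoose m 0 = 1 := by
  simp [cchoose_eq_intCast_choose]

lemma cchoose_succ_succ (m : ℤ) (i : ℕ) :
    cchoose (m + 1) (i + 1) = cchoose m i + cchoose m (i + 1) := by
  simp only [cchoose_eq_intCast_choose, Ring.choose_succ_succ, Int.cast_add]

lemma succ_mul_cchoose_succ (m : ℤ) (i : ℕ) :
    ((i : ℂ) + 1) * cchoose m (i + 1) = (m - i) * cchoose m i := by
  have hi : (i.factorial : ℂ) ≠ 0 := Nat.cast_ne_zero.2 i.factorial_ne_zero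
  have hi' : (i : ℂ) + 1 ≠ 0 := Nat.cast_add_one_ne_zero i
  rw [cchoose, cchoose, prod_range_succ, Nat.factorial_succ]
  push_cast
  field_simp

lemma cchoose_mul_sub (m : ℤ) (a i : ℕ) :
    cchoose m i * (m - a - i)
      = (a + (i + 1 : ℕ)) * cchoose m (i + 1) - a * cchoose (m + 1) (i + 1) := by
  rw [cchoose_succ_succ]
  push_cast
  linear_combination -succ_mul_cchoose_succ m i

lemma cchoose_natCast (n i : ℕ) : cchoose n i = n.choose i := by
  rw [cchoose_eq_intCast_choose, Ring.choose_natCast, Int.cast_natCast]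

lemma cchoose_zero_left {i : ℕ} (hi : i ≠ 0) : cchoose 0 i = 0 := by
  rw [cchoose_eq_intCast_choose, Ring.choose_zero_pos ℤ (Nat.pos_of_ne_zero hi), Int.cast_zero]

lemma cchoose_neg (m : ℤ) (i : ℕ) : cchoose (-m) i = (-1) ^ i * cchoose (m + i - 1) i := by
  simp only [cchoose_eq_intCast_choose, Ring.choose_neg]
  simp [Int.negOnePow_def, Units.smul_def]

lemma neg_one_pow_mul_cchoose_neg_two (i : ℕ) : (-1) ^ i * cchoose (-2) i = i + 1 := by
  rw [cchoose_neg, ← mul_assoc, ← mul_pow, show (2 : ℤ) + i - 1 = (i + 1 : ℕ) by push_cast; ring,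
    cchoose_natCast, Nat.choose_succ_self_right]
  simp

lemma cchoose_add (m n : ℤ) (j : ℕ) :
    cchoose (m + n) j = ∑ p ∈ antidiagonal j, cchoose m p.1 * cchoose n p.2 := by
  simp only [cchoose_eq_intCast_choose, Ring.add_choose_eq j (Commute.all m n)]
  push_cast
  rfl

-- Vandermonde's convolution after negating both upper indices on the right.
lemma sum_antidiagonal_neg_one_pow_mul_cchoose (m n : ℤ) (j : ℕ) :
    ∑ p ∈ antidiagonal j, (-1) ^ p.1 * cchoose m p.1 * cchoose (n - p.1) p.2
      = cchoose (n - m) j := by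
  rw [show n - m = -(m - n) by ring, cchoose_neg, show m - n + j - 1 = m + (j - n - 1) by ring,
    cchoose_add, mul_sum]
  refine sum_congr rfl fun p hp => ?_
  obtain rfl : p.1 + p.2 = j := mem_antidiagonal.1 hp
  rw [show n - (p.1 : ℤ) = -(p.1 - n) by ring, cchoose_neg,
    show (p.1 : ℤ) - n + p.2 - 1 = (p.1 + p.2 : ℕ) - n - 1 by push_cast; ring, pow_add]
  ring

end Binomial

section Sums

variable {M : Type*} [AddCommMonoid M]

lemma finsum_eq_sum_range {f : ℕ → M} {n : ℕ} (hf : ∀ i, n ≤ i → f i = 0) :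
    ∑ᶠ i, f i = ∑ i ∈ range n, f i :=
  finsum_eq_finsetSum_of_support_subset f fun i hi =>
    mem_coe.2 <| mem_range.2 <| not_le.1 fun h => hi (hf i h)

lemma sum_antidiagonal_succ_add (n : ℕ) {f g : ℕ → ℕ → M} (hf : ∀ i, f i 0 = 0)
    (hg : ∀ j, g 0 j = 0) :
    ∑ p ∈ antidiagonal (n + 1), (f p.1 p.2 + g p.1 p.2)
      = ∑ p ∈ antidiagonal n, (f p.1 (p.2 + 1) + g (p.1 + 1) p.2) := by
  rw [sum_add_distrib, sum_add_distrib, Finset.Nat.sum_antidiagonal_succ',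
    Finset.Nat.sum_antidiagonal_succ, hf, hg, zero_add, zero_add]

lemma sum_antidiagonal_left_comm (n : ℕ) (f : ℕ → ℕ → ℕ → M) :
    ∑ p ∈ antidiagonal n, ∑ q ∈ antidiagonal p.2, f p.1 q.1 q.2
      = ∑ p ∈ antidiagonal n, ∑ q ∈ antidiagonal p.2, f q.1 p.1 q.2 := by
  simp only [sum_sigma']
  refine sum_nbij' (fun x => ⟨(x.2.1, x.1.1 + x.2.2), (x.1.1, x.2.2)⟩)
    (fun x => ⟨(x.2.1, x.1.1 + x.2.2), (x.1.1, x.2.2)⟩) ?_ ?_ ?_ ?_ ?_ <;>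
  · rintro ⟨⟨a, b⟩, ⟨c, d⟩⟩ h
    simp only [mem_sigma, HasAntidiagonal.mem_antidiagonal] at h
    grind [HasAntidiagonal.mem_antidiagonal]

lemma sum_range_sum_antidiagonal {n : ℕ} {f : ℕ → ℕ → M} (hf : ∀ i j, n ≤ i + j → f i j = 0) :
    ∑ c ∈ range n, ∑ p ∈ antidiagonal c, f p.1 p.2 = ∑ i ∈ range n, ∑ j ∈ range n, f i j := by
  simp only [Finset.Nat.sum_antidiagonal_eq_sum_range_succ, Nat.succ_eq_add_one,
    sum_range_diag_flip]
  refine sum_congr rfl fun i _ => sum_subset (range_mono (n.sub_le i)) fun j _ hj => hf i j ?_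
  grind

lemma sum_range_sum_antidiagonal_sum_antidiagonal {n : ℕ} {f : ℕ → ℕ → ℕ → M}
    (hf : ∀ i j k, n ≤ i + j + k → f i j k = 0) :
    ∑ c ∈ range n, ∑ p ∈ antidiagonal c, ∑ q ∈ antidiagonal p.2, f p.1 q.1 q.2
      = ∑ i ∈ range n, ∑ j ∈ range n, ∑ k ∈ range n, f i j k := by
  rw [sum_range_sum_antidiagonal (f := fun i c => ∑ q ∈ antidiagonal c, f i q.1 q.2)]
  · exact sum_congr rfl fun i _ =>
      sum_range_sum_antidiagonal fun j k h => hf i j k (by omega)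
  · intro i c h
    refine sum_eq_zero fun q hq => hf i q.1 q.2 ?_
    rw [add_assoc, mem_antidiagonal.1 hq]
    exact h

end Sums

section LocallyFinite

variable {R M N ι : Type*} [Semiring R] [AddCommMonoid M] [Module R M] [AddCommMonoid N]
  [Module R N]

/-- The sum of a family of linear maps of which only finitely many are nonzero on each vector. -/
noncomputable def locallyFiniteSum (f : ι → M →ₗ[R] N)
    (hf : ∀ x, (fun i => f i x).HasFiniteSupport) : M →ₗ[R] N where
  toFun x := ∑ᶠ i, f i x
  map_add' x y := by simp only [map_add, finsum_add_distrib (hf x) (hf y)]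
  map_smul' c x := by simp only [map_smul, smul_finsum' c (hf x), RingHom.id_apply]

lemma locallyFiniteSum_apply {f : ι → M →ₗ[R] N}
    (hf : ∀ x, (fun i => f i x).HasFiniteSupport) (x : M) :
    locallyFiniteSum f hf x = ∑ᶠ i, f i x := rfl

lemma map_locallyFiniteSum {P : Type*} [AddCommMonoid P] [Module R P] (g : N →ₗ[R] P)
    {f : ι → M →ₗ[R] N} (hf : ∀ x, (fun i => f i x).HasFiniteSupport) (x : M) :
    g (locallyFiniteSum f hf x) = ∑ᶠ i, g (f i x) :=
  map_finsum g (hf x)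

end LocallyFinite

section DividedPower

variable (K : Type*) {A : Type*} [Field K] [Semiring A] [Algebra K A]

/-- The divided power `Dⁿ / n!`, that is, the coefficient of `xⁿ` in `e^{xD}`. -/
def divPow (D : A) (n : ℕ) : A := (n.factorial : K)⁻¹ • D ^ n

lemma divPow_zero (D : A) : divPow K D 0 = 1 := by simp [divPow]

lemma succ_smul_divPow_succ [CharZero K] (D : A) (n : ℕ) :
    ((n : K) + 1) • divPow K D (n + 1) = D * divPow K D n := by
  have hn : (n : K) + 1 ≠ 0 := Nat.cast_add_one_ne_zero n
  rw [divPow, divPow, smul_smul, mul_smul_comm, ← pow_succ', Nat.factorial_succ, Nat.cast_mul,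
    Nat.cast_succ, mul_inv, mul_inv_cancel_left₀ hn]

-- The hypothesis says that `X e` is the coefficient of `x^e` in `e^{xD} (X 0) e^{-xD}`.
lemma divPow_mul_eq_sum_antidiagonal [CharZero K] (D : A) (X : ℕ → A)
    (hX : ∀ e, D * X e = X e * D + ((e : K) + 1) • X (e + 1)) (n : ℕ) :
    divPow K D n * X 0 = ∑ p ∈ antidiagonal n, X p.2 * divPow K D p.1 := by
  induction n with
  | zero => simp [divPow_zero]
  | succ n ih =>
    refine smul_right_injective A (Nat.cast_add_one_ne_zero (R := K) n) ?_
    calc ((n : K) + 1) • (divPow K D (n + 1) * X 0)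
        = ∑ p ∈ antidiagonal n, D * (X p.2 * divPow K D p.1) := by
          rw [← smul_mul_assoc, succ_smul_divPow_succ, mul_assoc, ih, mul_sum]
      _ = ∑ p ∈ antidiagonal n, (((p.2 + 1 : ℕ) : K) • (X (p.2 + 1) * divPow K D p.1)
            + ((p.1 + 1 : ℕ) : K) • (X p.2 * divPow K D (p.1 + 1))) := by
          refine sum_congr rfl fun p _ => ?_
          rw [← mul_assoc, hX, add_mul, mul_assoc, ← succ_smul_divPow_succ, add_comm,
            mul_smul_comm, smul_mul_assoc, Nat.cast_succ, Nat.cast_succ]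
      _ = ∑ p ∈ antidiagonal (n + 1), ((p.2 : K) • (X p.2 * divPow K D p.1)
            + (p.1 : K) • (X p.2 * divPow K D p.1)) := by
          rw [sum_antidiagonal_succ_add n (f := fun i j => (j : K) • (X j * divPow K D i))
            (g := fun i j => (i : K) • (X j * divPow K D i)) (by simp) (by simp)]
      _ = ((n : K) + 1) • ∑ p ∈ antidiagonal (n + 1), X p.2 * divPow K D p.1 := by
          rw [smul_sum]
          refine sum_congr rfl fun p hp => ?_
          rw [← add_smul, ← Nat.cast_add, add_comm, mem_antidiagonal.1 hp, Nat.cast_succ]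

end DividedPower

namespace WeakModule

variable {V : VOA} (W : WeakModule V)

/-- The mode `v_n` as an endomorphism of `W`, linear in `v`. -/
def mode (n : ℤ) : V.carrier →ₗ[ℂ] Module.End ℂ W.carrier :=
  LinearMap.mk₂ ℂ (fun v w => W.op v n w)
    (fun _ _ w => (W.op_linear_left n w).map_add _ _)
    (fun _ _ w => (W.op_linear_left n w).map_smul _ _)
    (fun v _ _ => (W.op_linear_right v n).map_add _ _)
    (fun _ v _ => (W.op_linear_right v n).map_smul _ _)

lemma mode_apply (n : ℤ) (v : V.carrier) (w : W.carrier) : W.mode n v w = W.op v n w := rfl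

lemma mode_commutator (u v : V.carrier) (m n : ℤ) (M : ℕ)
    (hM : ∀ j : ℕ, M ≤ j → cchoose m j • V.op u j v = 0) :
    W.mode m u * W.mode n v - W.mode n v * W.mode m u
      = ∑ j ∈ range M, cchoose m j • W.mode (m + n - j) (V.op u j v) := by
  ext w
  have h := W.borcherds u v w 0 m n
  rw [finsum_eq_sum_range (n := M), finsum_eq_single _ 0] at h
  · simpa [mode_apply, cchoose_zero_right] using h.symm
  · intro i hi
    rw [cchoose_zero_left hi, mul_zero, zero_smul]
  · intro j hj
    rw [zero_add, ← mode_apply, ← LinearMap.smul_apply, ← map_smul, hM j hj, map_zero,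
      LinearMap.zero_apply]

lemma mode_L_neg_one (n : ℤ) (v : V.carrier) :
    W.mode n (V.op V.omega 0 v) = (-(n : ℂ)) • W.mode (n - 1) v := by
  have hv : V.op V.omega 0 v = V.op v (-2) V.one := by
    simpa [V.create] using V.L_neg_one v (-1) V.one
  ext w
  have h := W.borcherds v V.one w (-2) 0 n
  have hterm : ∀ i : ℕ, ((-1) ^ i * cchoose (-2) i) •
      (W.op v (-2 + 0 - i) (W.op V.one (n + i) w)
        - (-1 : ℂ) ^ (-2 : ℤ) • W.op V.one (-2 + n - i) (W.op v (0 + i) w))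
      = if i + 1 = n.natAbs then (-(n : ℂ)) • W.mode (n - 1) v w else 0 := by
    intro i
    rw [neg_one_pow_mul_cchoose_neg_two, W.one_op, W.one_op, mode_apply]
    rcases eq_or_ne n (-(i + 1)) with rfl | hneg
    · rw [if_pos (by ring), if_neg (by omega), if_pos (by omega), smul_zero, sub_zero,
        show (-2 : ℤ) + 0 - i = -(i + 1) - 1 by ring]
      push_cast
      rw [neg_neg]
    rcases eq_or_ne n (i + 1) with rfl | hpos
    · rw [if_neg (by omega), if_pos (by ring), if_pos (by omega), (W.op_linear_right v _).map_zero,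
        show (0 : ℤ) + i = i + 1 - 1 by ring, zpow_neg, zpow_ofNat, neg_one_sq, inv_one]
      push_cast
      module
    · rw [if_neg (by omega), if_neg (by omega), if_neg (by omega),
        (W.op_linear_right v _).map_zero, smul_zero, sub_zero, smul_zero]
  simp only [hterm] at h
  rw [finsum_eq_single _ 0, finsum_eq_single _ (n.natAbs - 1) (by grind)] at h
  · simp only [CharP.cast_eq_zero, cchoose_zero_right, one_smul, add_zero, zero_add, sub_zero] at h
    rw [hv, mode_apply, h, LinearMap.smul_apply]
    rcases eq_or_ne n 0 with rfl | hn
    · simp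
    · rw [if_pos (Nat.sub_add_cancel (Int.natAbs_pos.2 hn))]
  · intro i hi
    rw [cchoose_zero_left hi, zero_smul]

end WeakModule

namespace VOA

variable (V : VOA)

/-- `V` as a weak module over itself. -/
abbrev selfModule : WeakModule V where
  carrier := V.carrier
  op := V.op
  op_linear_left := V.op_linear_left
  op_linear_right := V.op_linear_right
  trunc := V.trunc
  one_op := V.one_op
  borcherds := V.borcherds

/-- The mode `v_n` as an endomorphism of `V`, linear in `v`. -/
abbrev mode (n : ℤ) : V.carrier →ₗ[ℂ] Module.End ℂ V.carrier := V.selfModule.mode n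

lemma mode_apply (n : ℤ) (u v : V.carrier) : V.mode n u v = V.op u n v := rfl

/-- The Virasoro operator `L(1)` as an endomorphism of `V`. -/
def L1 : Module.End ℂ V.carrier := V.mode 2 V.omega

/-- The divided power `L(1)ⁿ / n!`. -/
noncomputable abbrev divL1 (n : ℕ) : Module.End ℂ V.carrier := divPow ℂ V.L1 n

variable {V} {h k : ℤ} {u v : V.carrier}

lemma succ_smul_divL1_succ (n : ℕ) (v : V.carrier) :
    ((n : ℂ) + 1) • V.divL1 (n + 1) v = V.L1 (V.divL1 n v) := by
  rw [← LinearMap.smul_apply, succ_smul_divPow_succ, Module.End.mul_apply]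

lemma divL1_eq_iterate (n : ℕ) (v : V.carrier) :
    V.divL1 n v = (n.factorial : ℂ)⁻¹ • (V.L 1)^[n] v := by
  rw [divL1, divPow, LinearMap.smul_apply, Module.End.pow_apply]
  rfl

variable (V) in
lemma exists_forall_lt_eq_zero : ∃ N : ℤ, ∀ h < N, ∀ v ∈ V.wtSpace h, v = 0 := by
  obtain ⟨N, hN⟩ := V.lower_trunc
  exact ⟨N, fun h hh v hv => by rwa [hN h hh, Submodule.mem_bot] at hv⟩

lemma homogeneous_induction {p : V.carrier → Prop} (add : ∀ u v, p u → p v → p (u + v))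
    (homogeneous : ∀ h, ∀ v ∈ V.wtSpace h, p v) (v : V.carrier) : p v := by
  rw [← V.proj_sum v]
  exact finsum_induction p (homogeneous 0 0 (zero_mem _)) add
    fun h => homogeneous h _ (V.proj_mem h v)

lemma mode_mem_wtSpace (hu : u ∈ V.wtSpace k) (hv : v ∈ V.wtSpace h) (n : ℤ) :
    V.mode n u v ∈ V.wtSpace (k + h - n - 1) :=
  V.op_wt k h n u hu v hv

lemma divL1_mem_wtSpace (hv : v ∈ V.wtSpace h) (n : ℕ) : V.divL1 n v ∈ V.wtSpace (h - n) := by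
  have hL1 : ∀ i : ℕ, (V.L1 ^ i) v ∈ V.wtSpace (h - i) := by
    intro i
    induction i with
    | zero => simpa using hv
    | succ i ih =>
      rw [pow_succ', Module.End.mul_apply,
        show h - (i + 1 : ℕ) = 2 + (h - i) - 2 - 1 by push_cast; ring]
      exact mode_mem_wtSpace V.omega_wt ih 2
  exact Submodule.smul_mem _ _ (hL1 n)

lemma exists_divL1_eq_zero (v : V.carrier) : ∃ M : ℕ, ∀ n, M ≤ n → V.divL1 n v = 0 := by
  induction v using homogeneous_induction with
  | add u v hu hv =>
    obtain ⟨A, hA⟩ := hu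
    obtain ⟨B, hB⟩ := hv
    refine ⟨max A B, fun n hn => ?_⟩
    rw [map_add, hA n (le_of_max_le_left hn), hB n (le_of_max_le_right hn), add_zero]
  | homogeneous h v hv =>
    obtain ⟨N, hN⟩ := V.exists_forall_lt_eq_zero
    exact ⟨(h - N + 1).toNat, fun n hn => hN _ (by omega) _ (divL1_mem_wtSpace hv n)⟩

lemma L_neg_one_mem_wtSpace (hv : v ∈ V.wtSpace h) : V.op V.omega 0 v ∈ V.wtSpace (h + 1) := by
  rw [show h + 1 = 2 + h - 0 - 1 by ring]
  exact mode_mem_wtSpace V.omega_wt hv 0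

lemma L1_L_neg_one (hv : v ∈ V.wtSpace h) :
    V.L1 (V.op V.omega 0 v) = V.op V.omega 0 (V.L1 v) + (2 * h : ℂ) • v := by
  have hvir : V.L1 (V.op V.omega 0 v) - V.op V.omega 0 (V.L1 v) = (2 : ℂ) • V.op V.omega 1 v := by
    simpa [L1, mode_apply, one_add_one_eq_two] using V.virasoro 1 (-1) v
  rw [mul_smul, ← V.L_zero h v hv, ← hvir, add_sub_cancel]

lemma divL1_succ_L_neg_one (hv : v ∈ V.wtSpace h) (n : ℕ) :
    V.divL1 (n + 1) (V.op V.omega 0 v)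
      = V.op V.omega 0 (V.divL1 (n + 1) v) + (2 * h - n : ℂ) • V.divL1 n v := by
  induction n with
  | zero => simpa [divPow] using L1_L_neg_one hv
  | succ n ih =>
    refine smul_right_injective _ (Nat.cast_add_one_ne_zero (R := ℂ) (n + 1)) ?_
    calc (((n + 1 : ℕ) : ℂ) + 1) • V.divL1 (n + 2) (V.op V.omega 0 v)
        = V.L1 (V.op V.omega 0 (V.divL1 (n + 1) v))
            + (2 * h - n : ℂ) • V.L1 (V.divL1 n v) := by
          rw [succ_smul_divL1_succ, ih, map_add, map_smul]
      _ = V.op V.omega 0 (V.L1 (V.divL1 (n + 1) v))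
            + ((2 * (h - (n + 1)) + (2 * h - n) * (n + 1) : ℂ)) • V.divL1 (n + 1) v := by
          rw [L1_L_neg_one (divL1_mem_wtSpace hv (n + 1)), ← succ_smul_divL1_succ n]
          push_cast
          module
      _ = (((n + 1 : ℕ) : ℂ) + 1) • (V.op V.omega 0 (V.divL1 (n + 2) v)
            + (2 * h - (n + 1 : ℕ) : ℂ) • V.divL1 (n + 1) v) := by
          rw [← succ_smul_divL1_succ, (V.op_linear_right _ _).map_smul]
          push_cast
          module

lemma divL1_L_neg_one_eq_zero (hv : v ∈ V.wtSpace h) {M : ℕ} (hM : ∀ i, M ≤ i → V.divL1 i v = 0)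
    {i : ℕ} (hi : M + 1 ≤ i) : V.divL1 i (V.op V.omega 0 v) = 0 := by
  obtain ⟨j, rfl⟩ := Nat.exists_eq_add_of_le' (Nat.one_le_of_lt hi)
  rw [divL1_succ_L_neg_one hv, hM j (by omega), hM (j + 1) (by omega),
    (V.op_linear_right _ _).map_zero, smul_zero, add_zero]

lemma L1_mul_mode (hu : u ∈ V.wtSpace k) (n : ℤ) :
    V.L1 * V.mode n u = V.mode n u * V.L1 + (2 * k - n - 2 : ℂ) • V.mode (n + 1) u
      + V.mode n (V.L1 u) := by
  have hchoose : ∀ j : ℕ, cchoose 2 j = Nat.choose 2 j := cchoose_natCast 2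
  have h := V.selfModule.mode_commutator V.omega u 2 n 3 fun j hj => by
    rw [hchoose, Nat.choose_eq_zero_of_lt hj, Nat.cast_zero, zero_smul]
  have h0 : V.mode (2 + n) (V.op V.omega 0 u) = (-(n + 2 : ℂ)) • V.mode (n + 1) u := by
    rw [WeakModule.mode_L_neg_one, show 2 + n - 1 = n + 1 by ring]
    push_cast
    rw [add_comm]
  have h1 : V.op V.omega 1 u = (k : ℂ) • u := V.L_zero k u hu
  have h2 : V.op V.omega 2 u = V.L1 u := rfl
  simp only [sum_range_succ, sum_range_zero, hchoose, Nat.cast_zero, Nat.cast_one, Nat.cast_ofNat,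
    sub_zero, h0, h1, h2, map_smul, show 2 + n - 1 = n + 1 by ring, add_sub_cancel_left] at h
  rw [L1, sub_eq_iff_eq_add'.1 h, ← L1]
  simp only [Nat.choose_zero_right, Nat.choose_one_right, Nat.choose_self]
  push_cast
  module

lemma L1_mul_mode_divL1 (hu : u ∈ V.wtSpace k) (i : ℤ) (a s : ℕ) :
    V.L1 * V.mode (i + s) (V.divL1 a u)
      = V.mode (i + s) (V.divL1 a u) * V.L1
        + (((2 * k - a - i - 2 : ℤ) : ℂ) - a - s) • V.mode (i + (s + 1 : ℕ)) (V.divL1 a u)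
        + ((a + 1 : ℕ) : ℂ) • V.mode (i + s) (V.divL1 (a + 1) u) := by
  rw [L1_mul_mode (divL1_mem_wtSpace hu a), ← succ_smul_divL1_succ, map_smul]
  push_cast
  rw [add_assoc i]
  congr 3
  ring

/-- The coefficient of `x^e` in `e^{xL(1)} u_i e^{-xL(1)}`, for `u` of weight `k`. -/
noncomputable def conjMode (k i : ℤ) (u : V.carrier) (e : ℕ) : Module.End ℂ V.carrier :=
  ∑ p ∈ antidiagonal e, cchoose (2 * k - p.1 - i - 2) p.2 • V.mode (i + p.2) (V.divL1 p.1 u)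

lemma conjMode_zero (k i : ℤ) (u : V.carrier) : conjMode k i u 0 = V.mode i u := by
  simp [conjMode, cchoose_zero_right, divPow_zero]

lemma L1_mul_conjMode (hu : u ∈ V.wtSpace k) (i : ℤ) (e : ℕ) :
    V.L1 * conjMode k i u e
      = conjMode k i u e * V.L1 + ((e : ℂ) + 1) • conjMode k i u (e + 1) := by
  let f (c : ℕ → ℕ → ℂ) (a s : ℕ) : Module.End ℂ V.carrier :=
    c a s • V.mode (i + s) (V.divL1 a u)
  calc V.L1 * conjMode k i u e
      = conjMode k i u e * V.L1 + ∑ p ∈ antidiagonal e,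
          (f (fun a s => (a + s) * cchoose (2 * k - a - i - 2) s
              - a * cchoose (2 * k - a - i - 2 + 1) s) p.1 (p.2 + 1)
            + f (fun a s => a * cchoose (2 * k - a - i - 2 + 1) s) (p.1 + 1) p.2) := by
        rw [conjMode, mul_sum, sum_mul, ← sum_add_distrib]
        refine sum_congr rfl fun p _ => ?_
        have hshift : 2 * k - (p.1 + 1 : ℕ) - i - 2 + 1 = 2 * k - p.1 - i - 2 := by
          push_cast
          ring
        simp only [f]
        rw [mul_smul_comm, L1_mul_mode_divL1 hu, smul_add, smul_add, smul_smul, smul_smul,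
          cchoose_mul_sub, hshift, smul_mul_assoc, add_assoc, mul_comm _ ((p.1 + 1 : ℕ) : ℂ)]
    _ = conjMode k i u e * V.L1 + ((e : ℂ) + 1) • conjMode k i u (e + 1) := by
        rw [← sum_antidiagonal_succ_add]
        · congr 1
          rw [conjMode, smul_sum]
          refine sum_congr rfl fun p hp => ?_
          rw [← add_smul, sub_add_cancel, smul_smul, ← Nat.cast_add, mem_antidiagonal.1 hp,
            Nat.cast_succ]
        · simp [f, cchoose_zero_right]
        · simp [f]

lemma divL1_mul_mode (hu : u ∈ V.wtSpace k) (i : ℤ) (n : ℕ) :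
    V.divL1 n * V.mode i u = ∑ p ∈ antidiagonal n, conjMode k i u p.2 * V.divL1 p.1 := by
  rw [← conjMode_zero k i u]
  exact divPow_mul_eq_sum_antidiagonal ℂ V.L1 _ (L1_mul_conjMode hu i) n

lemma sum_antidiagonal_conjMode (k m : ℤ) (u : V.carrier) (n : ℕ) :
    ∑ p ∈ antidiagonal n, ((-1) ^ p.1 * cchoose m p.1) • conjMode k p.1 u p.2
      = ∑ p ∈ antidiagonal n, cchoose (2 * k - p.1 - 2 - m) p.2 • V.mode p.2 (V.divL1 p.1 u) := by
  simp only [conjMode, smul_sum, smul_smul]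
  rw [sum_antidiagonal_left_comm n fun i a s =>
    ((-1) ^ i * cchoose m i * cchoose (2 * k - a - i - 2) s) • V.mode (i + s) (V.divL1 a u)]
  refine sum_congr rfl fun p _ => ?_
  rw [← sum_antidiagonal_neg_one_pow_mul_cchoose, sum_smul]
  refine sum_congr rfl fun q hq => ?_
  rw [← mem_antidiagonal.1 hq, show 2 * k - (p.1 : ℤ) - q.1 - 2 = 2 * k - p.1 - 2 - q.1 by ring,
    Nat.cast_add]

lemma sum_antidiagonal_divL1_mode (hu : u ∈ V.wtSpace k) (m : ℤ) (n : ℕ) :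
    ∑ p ∈ antidiagonal n, ((-1) ^ p.1 * cchoose m p.1) • (V.divL1 p.2 * V.mode p.1 u)
      = ∑ p ∈ antidiagonal n, ∑ q ∈ antidiagonal p.2,
          cchoose (2 * k - q.1 - 2 - m) q.2 • (V.mode q.2 (V.divL1 q.1 u) * V.divL1 p.1) := by
  simp only [divL1_mul_mode hu, smul_sum, ← smul_mul_assoc, ← sum_mul,
    ← sum_antidiagonal_conjMode]
  simp only [sum_mul]
  rw [sum_antidiagonal_left_comm n fun i b e =>
    (((-1) ^ i * cchoose m i) • conjMode k i u e) * V.divL1 b]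

end VOA

namespace WeakModule

variable {V : VOA} (W : WeakModule V) {k l h : ℤ} {u v : V.carrier}

lemma hasFiniteSupport_mode_divL1 (h n : ℤ) (v : V.carrier) :
    (fun i : ℕ => (W.mode (2 * h - n - i - 2) ∘ₗ V.divL1 i) v).HasFiniteSupport := by
  obtain ⟨M, hM⟩ := VOA.exists_divL1_eq_zero v
  refine (Set.finite_lt_nat M).subset fun i hi => show i < M from not_le.1 fun hMi => hi ?_
  beta_reduce
  rw [LinearMap.comp_apply, hM i hMi, map_zero]

/-- The endomorphism `(-1)^h Σ_i (L(1)^i v / i!)_{2h-n-i-2}` of `W`: for `v` of weight `h`, the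
coefficient of `x^{-n-1}` in `Y_W(e^{xL(1)}(-x^{-2})^{L(0)}v, x^{-1})`. -/
noncomputable def homAdjointMode (h n : ℤ) : V.carrier →ₗ[ℂ] Module.End ℂ W.carrier :=
  (-1 : ℂ) ^ h • locallyFiniteSum (fun i : ℕ => W.mode (2 * h - n - i - 2) ∘ₗ V.divL1 i)
    (W.hasFiniteSupport_mode_divL1 h n)

lemma hasFiniteSupport_homAdjointMode_proj (n : ℤ) (v : V.carrier) :
    (fun h => (W.homAdjointMode h n ∘ₗ (V.proj_linear h).mk' (V.proj h)) v).HasFiniteSupport :=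
  (V.proj_finite v).subset fun h hh (hv : V.proj h v = 0) => hh <| by
    beta_reduce
    rw [LinearMap.comp_apply, IsLinearMap.mk'_apply, hv, map_zero]

/-- The coefficient of `x^{-n-1}` in `Y_W(e^{xL(1)}(-x^{-2})^{L(0)}v, x^{-1})` as an endomorphism
of `W`, linear in `v`; its transpose is `v*_n`. -/
noncomputable def adjointMode (n : ℤ) : V.carrier →ₗ[ℂ] Module.End ℂ W.carrier :=
  locallyFiniteSum (fun h => W.homAdjointMode h n ∘ₗ (V.proj_linear h).mk' (V.proj h))
    (W.hasFiniteSupport_homAdjointMode_proj n)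

lemma homAdjointMode_apply (h n : ℤ) (v : V.carrier) :
    W.homAdjointMode h n v = (-1 : ℂ) ^ h • ∑ᶠ i : ℕ, W.mode (2 * h - n - i - 2) (V.divL1 i v) :=
  rfl

lemma adjointMode_apply_of_mem (hv : v ∈ V.wtSpace h) (n : ℤ) {M : ℕ}
    (hM : ∀ i, M ≤ i → V.divL1 i v = 0) :
    W.adjointMode n v
      = (-1 : ℂ) ^ h • ∑ i ∈ range M, W.mode (2 * h - n - i - 2) (V.divL1 i v) := by
  rw [adjointMode, locallyFiniteSum_apply, finsum_eq_single _ h, LinearMap.comp_apply,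
    IsLinearMap.mk'_apply, V.proj_eq h v hv, homAdjointMode_apply, finsum_eq_sum_range]
  · intro i hi
    rw [hM i hi, map_zero]
  · intro g hg
    rw [LinearMap.comp_apply, IsLinearMap.mk'_apply, V.proj_ne h g hg.symm v hv, map_zero]

lemma dmode_eq_comp_adjointMode (φ : Module.Dual ℂ W.carrier) (v : V.carrier) (n : ℤ) :
    W.dmode v n φ = ⇑(φ ∘ₗ W.adjointMode n v) := by
  ext w
  let evalAt : Module.End ℂ W.carrier →ₗ[ℂ] ℂ := φ ∘ₗ LinearMap.applyₗ w
  change _ = evalAt (W.adjointMode n v)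
  rw [adjointMode, map_locallyFiniteSum]
  refine finsum_congr fun h => ?_
  change _ = evalAt (W.homAdjointMode h n (V.proj h v))
  rw [homAdjointMode, LinearMap.smul_apply, map_smul, map_locallyFiniteSum, smul_finsum]
  refine finsum_congr fun i => ?_
  change _ = (-1 : ℂ) ^ h • evalAt (W.mode (2 * h - n - i - 2) (V.divL1 i (V.proj h v)))
  rw [VOA.divL1_eq_iterate, map_smul, map_smul, smul_smul, div_eq_mul_inv, sub_right_comm]
  rfl

lemma adjointMode_L_neg_one_of_mem (hv : v ∈ V.wtSpace h) (n : ℤ) :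
    W.adjointMode n (V.op V.omega 0 v) = (-(n : ℂ)) • W.adjointMode (n - 1) v := by
  obtain ⟨M, hM⟩ := VOA.exists_divL1_eq_zero v
  let g (i : ℕ) : Module.End ℂ W.carrier :=
    (2 * h - n - i : ℂ) • W.mode (2 * h - n - i - 1) (V.divL1 i v)
  have hzero : W.mode (2 * (h + 1) - n - (0 : ℕ) - 2) (V.divL1 0 (V.op V.omega 0 v)) = -g 0 := by
    simp only [g, VOA.divL1, divPow_zero, Module.End.one_apply]
    rw [mode_L_neg_one, Nat.cast_zero,
      show 2 * (h + 1) - n - 0 - 2 - 1 = 2 * h - n - 0 - 1 by ring]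
    push_cast
    module
  have hsucc : ∀ i : ℕ,
      W.mode (2 * (h + 1) - n - (i + 1 : ℕ) - 2) (V.divL1 (i + 1) (V.op V.omega 0 v))
        = (g i - g (i + 1)) + (n : ℂ) • W.mode (2 * h - (n - 1) - i - 2) (V.divL1 i v) := by
    intro i
    simp only [g]
    rw [VOA.divL1_succ_L_neg_one hv, map_add, map_smul, mode_L_neg_one,
      show 2 * (h + 1) - n - (i + 1 : ℕ) - 2 = 2 * h - n - i - 1 by push_cast; ring,
      show 2 * h - (n - 1) - i - 2 = 2 * h - n - i - 1 by ring,
      show 2 * h - n - (i + 1 : ℕ) - 1 = 2 * h - n - i - 1 - 1 by push_cast; ring]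
    push_cast
    module
  have hgM : g M = 0 := by
    simp only [g]
    rw [hM M le_rfl, map_zero, smul_zero]
  rw [W.adjointMode_apply_of_mem (VOA.L_neg_one_mem_wtSpace hv) n
      fun _ => VOA.divL1_L_neg_one_eq_zero hv hM,
    W.adjointMode_apply_of_mem hv _ hM, sum_range_succ', hzero,
    sum_congr rfl fun i _ => hsucc i, sum_add_distrib, sum_range_sub', hgM, ← smul_sum,
    zpow_add_one₀ (by norm_num)]
  module

lemma adjointMode_L_neg_one (n : ℤ) (v : V.carrier) :
    W.adjointMode n (V.op V.omega 0 v) = (-(n : ℂ)) • W.adjointMode (n - 1) v := by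
  induction v using VOA.homogeneous_induction with
  | add u v hu hv =>
    rw [(V.op_linear_right _ _).map_add, map_add, hu, hv, map_add, smul_add]
  | homogeneous h v hv => exact W.adjointMode_L_neg_one_of_mem hv n

lemma adjointMode_mode_of_mem (hu : u ∈ V.wtSpace k) (hv : v ∈ V.wtSpace l) (m n : ℤ) (i : ℕ)
    {M : ℕ} (hM : ∀ b, M ≤ b → V.divL1 b (V.mode i u v) = 0) :
    W.adjointMode (m + n - i) (V.mode i u v)
      = -(-1 : ℂ) ^ (k + l) • (-1 : ℂ) ^ i • ∑ b ∈ range M,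
          W.mode (2 * k + 2 * l - 4 - m - n - (i + b : ℕ)) (V.divL1 b (V.mode i u v)) := by
  have hsign : (-1 : ℂ) ^ (k + l - i - 1) = -(-1 : ℂ) ^ (k + l) * (-1) ^ i := by
    rw [zpow_sub_one₀ (by norm_num), zpow_sub₀ (by norm_num), zpow_natCast, div_eq_mul_inv,
      ← inv_pow, inv_neg_one, mul_neg_one, neg_mul]
  have hindex : ∀ b : ℕ, 2 * (k + l - i - 1) - (m + n - i) - b - 2
      = 2 * k + 2 * l - 4 - m - n - (i + b : ℕ) := by
    intro b
    push_cast
    ring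
  simp only [W.adjointMode_apply_of_mem (VOA.mode_mem_wtSpace hu hv i) _ hM, hsign, mul_smul,
    hindex]

lemma finsum_cchoose_smul_adjointMode (hu : u ∈ V.wtSpace k) (hv : v ∈ V.wtSpace l) (m n : ℤ)
    {M : ℕ} (hM : ∀ i b : ℕ, M ≤ i + b → V.divL1 b (V.mode i u v) = 0) :
    ∑ᶠ i : ℕ, cchoose m i • W.adjointMode (m + n - i) (V.mode i u v)
      = -(-1 : ℂ) ^ (k + l) • ∑ c ∈ range M, W.mode (2 * k + 2 * l - 4 - m - n - c)
          (∑ p ∈ antidiagonal c, ((-1) ^ p.1 * cchoose m p.1) • V.divL1 p.2 (V.mode p.1 u v)) := by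
  let f (i b : ℕ) : Module.End ℂ W.carrier :=
    W.mode (2 * k + 2 * l - 4 - m - n - (i + b : ℕ))
      (((-1) ^ i * cchoose m i) • V.divL1 b (V.mode i u v))
  have hterm : ∀ i : ℕ, cchoose m i • W.adjointMode (m + n - i) (V.mode i u v)
      = -(-1 : ℂ) ^ (k + l) • ∑ b ∈ range M, f i b := by
    intro i
    rw [W.adjointMode_mode_of_mem hu hv m n i fun b hb => hM i b (Nat.le_add_left_of_le hb),
      smul_comm (cchoose m i), smul_comm (cchoose m i), ← mul_smul _ (cchoose m i), smul_sum]
    simp only [f, map_smul]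
  have hsum : ∑ c ∈ range M, ∑ p ∈ antidiagonal c, f p.1 p.2
      = ∑ i ∈ range M, ∑ b ∈ range M, f i b :=
    sum_range_sum_antidiagonal fun i b hib => by
      simp only [f, hM i b hib, smul_zero, map_zero]
  rw [finsum_congr hterm, finsum_eq_sum_range, ← smul_sum, ← hsum]
  · congr 1
    refine sum_congr rfl fun c _ => ?_
    rw [map_sum]
    refine sum_congr rfl fun p hp => ?_
    simp only [f, HasAntidiagonal.mem_antidiagonal.1 hp]
  · intro i hi
    simp only [f, hM i _ (Nat.le_add_right_of_le hi), smul_zero, map_zero, sum_const_zero]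

lemma adjointMode_commutator_of_mem (hu : u ∈ V.wtSpace k) (hv : v ∈ V.wtSpace l) (m n : ℤ)
    {M : ℕ} (hMu : ∀ i, M ≤ i → V.divL1 i u = 0) (hMv : ∀ i, M ≤ i → V.divL1 i v = 0)
    (hM : ∀ b a j : ℕ, M ≤ b + a + j → V.mode j (V.divL1 a u) (V.divL1 b v) = 0) :
    W.adjointMode m u * W.adjointMode n v - W.adjointMode n v * W.adjointMode m u
      = (-1 : ℂ) ^ (k + l) • ∑ c ∈ range M, W.mode (2 * k + 2 * l - 4 - m - n - c)
          (∑ p ∈ antidiagonal c, ∑ q ∈ antidiagonal p.2, cchoose (2 * k - q.1 - 2 - m) q.2 •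
            V.mode q.2 (V.divL1 q.1 u) (V.divL1 p.1 v)) := by
  let f (b a j : ℕ) : Module.End ℂ W.carrier :=
    W.mode (2 * k + 2 * l - 4 - m - n - (b + a + j : ℕ))
      (cchoose (2 * k - a - 2 - m) j • V.mode j (V.divL1 a u) (V.divL1 b v))
  have hterm : ∀ b a : ℕ,
      W.mode (2 * k - m - a - 2) (V.divL1 a u) * W.mode (2 * l - n - b - 2) (V.divL1 b v)
        - W.mode (2 * l - n - b - 2) (V.divL1 b v) * W.mode (2 * k - m - a - 2) (V.divL1 a u)
        = ∑ j ∈ range M, f b a j := by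
    intro b a
    rw [W.mode_commutator _ _ _ _ M fun j hj => by
      rw [← VOA.mode_apply, hM b a j (by omega), smul_zero]]
    refine sum_congr rfl fun j _ => ?_
    simp only [f]
    rw [map_smul, show 2 * k - m - a - 2 = 2 * k - a - 2 - m by ring]
    congr 3
    push_cast
    ring
  have hsum : ∑ c ∈ range M, ∑ p ∈ antidiagonal c, ∑ q ∈ antidiagonal p.2, f p.1 q.1 q.2
      = ∑ b ∈ range M, ∑ a ∈ range M, ∑ j ∈ range M, f b a j :=
    sum_range_sum_antidiagonal_sum_antidiagonal fun b a j h => by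
      simp only [f, hM b a j h, smul_zero, map_zero]
  rw [W.adjointMode_apply_of_mem hu m hMu, W.adjointMode_apply_of_mem hv n hMv,
    smul_mul_smul_comm, smul_mul_smul_comm, mul_comm ((-1 : ℂ) ^ l), ← smul_sub,
    ← zpow_add₀ (by norm_num), sum_mul_sum, sum_mul_sum, sum_comm, ← sum_sub_distrib]
  simp only [← sum_sub_distrib, hterm]
  rw [← hsum]
  congr 1
  refine sum_congr rfl fun c _ => ?_
  simp only [map_sum]
  refine sum_congr rfl fun p hp => sum_congr rfl fun q hq => ?_
  simp only [f, add_assoc, HasAntidiagonal.mem_antidiagonal.1 hq,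
    HasAntidiagonal.mem_antidiagonal.1 hp]

lemma adjointMode_bracket_of_mem (hu : u ∈ V.wtSpace k) (hv : v ∈ V.wtSpace l) (m n : ℤ) :
    W.adjointMode n v * W.adjointMode m u - W.adjointMode m u * W.adjointMode n v
      = ∑ᶠ i : ℕ, cchoose m i • W.adjointMode (m + n - i) (V.mode i u v) := by
  obtain ⟨N, hN⟩ := V.exists_forall_lt_eq_zero
  obtain ⟨M, hMk, hMl, hMkl⟩ : ∃ M : ℕ, k < N + M ∧ l < N + M ∧ k + l ≤ N + M :=
    ⟨((k - N) ⊔ (l - N) ⊔ (k + l - N) + 1).toNat, by omega, by omega, by omega⟩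
  rw [← neg_sub, W.adjointMode_commutator_of_mem hu hv m n (M := M),
    W.finsum_cchoose_smul_adjointMode hu hv m n (M := M), neg_smul]
  · congr! 4 with c
    have h := congr($(VOA.sum_antidiagonal_divL1_mode hu m c) v)
    simpa using h.symm
  · exact fun i b hib => hN _ (by omega) _ (VOA.divL1_mem_wtSpace (VOA.mode_mem_wtSpace hu hv i) b)
  · exact fun i hi => hN _ (by omega) _ (VOA.divL1_mem_wtSpace hu i)
  · exact fun i hi => hN _ (by omega) _ (VOA.divL1_mem_wtSpace hv i)
  · exact fun b a j h => hN _ (by omega) _ <|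
      VOA.mode_mem_wtSpace (VOA.divL1_mem_wtSpace hu a) (VOA.divL1_mem_wtSpace hv b) j

lemma hasFiniteSupport_cchoose_smul_adjointMode (u v : V.carrier) (m n : ℤ) :
    (fun i : ℕ => cchoose m i • W.adjointMode (m + n - i) (V.mode i u v)).HasFiniteSupport := by
  obtain ⟨N, hN⟩ := V.trunc u v
  refine (Set.finite_lt_nat N.toNat).subset fun i hi =>
    show i < N.toNat from not_le.1 fun hNi => hi ?_
  beta_reduce
  rw [VOA.mode_apply, hN i (by omega), map_zero, smul_zero]

lemma adjointMode_bracket (u v : V.carrier) (m n : ℤ) :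
    W.adjointMode n v * W.adjointMode m u - W.adjointMode m u * W.adjointMode n v
      = ∑ᶠ i : ℕ, cchoose m i • W.adjointMode (m + n - i) (V.mode i u v) := by
  induction u using VOA.homogeneous_induction with
  | add u₁ u₂ hu₁ hu₂ =>
    simp only [map_add, LinearMap.add_apply, smul_add]
    rw [finsum_add_distrib (W.hasFiniteSupport_cchoose_smul_adjointMode u₁ v m n)
      (W.hasFiniteSupport_cchoose_smul_adjointMode u₂ v m n), ← hu₁, ← hu₂]
    noncomm_ring
  | homogeneous k u hu =>
    induction v using VOA.homogeneous_induction with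
    | add v₁ v₂ hv₁ hv₂ =>
      simp only [map_add, smul_add]
      rw [finsum_add_distrib (W.hasFiniteSupport_cchoose_smul_adjointMode u v₁ m n)
        (W.hasFiniteSupport_cchoose_smul_adjointMode u v₂ m n), ← hv₁, ← hv₂]
      noncomm_ring
    | homogeneous l v hv => exact W.adjointMode_bracket_of_mem hu hv m n

end WeakModule

/-- For a VOA `V` and any weak `V`-module `W`, the full dual `W*` is a
module for the Lie algebra `g(V) = (V ⊗ ℂ[t,t⁻¹])/im(L(-1)⊗1 + 1⊗d/dt)` with `v(n)`
acting as `v*ₙ`.  Concretely: each `v*ₙ` maps `W*` to `W*` (i.e. preserves linearity),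
the action is linear in `v`, it kills the image of `d = L(-1)⊗1 + 1⊗d/dt` (that is,
`(L(-1)v)*ₙ = -n v*_{n-1}`, so the action descends from `V̂` to `g(V) = V̂/dV̂`), and it
respects the bracket `[u(m), v(n)] = Σ_{i≥0} C(m,i) (uᵢv)(m+n-i)` of `g(V)`. -/
theorem full_dual_is_gV_module (V : VOA) (W : WeakModule V) :
    ∀ α : W.carrier → ℂ, IsLinearMap ℂ α →
      (∀ (v : V.carrier) (n : ℤ), IsLinearMap ℂ (W.dmode v n α)) ∧
      (∀ (u v : V.carrier) (c : ℂ) (n : ℤ) (w : W.carrier),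
        W.dmode (u + v) n α w = W.dmode u n α w + W.dmode v n α w ∧
        W.dmode (c • u) n α w = c * W.dmode u n α w) ∧
      (∀ (v : V.carrier) (n : ℤ) (w : W.carrier),
        W.dmode (V.op V.omega 0 v) n α w = (-(n : ℂ)) * W.dmode v (n - 1) α w) ∧
      (∀ (u v : V.carrier) (m n : ℤ) (w : W.carrier),
        W.dmode u m (W.dmode v n α) w - W.dmode v n (W.dmode u m α) w
          = ∑ᶠ i : ℕ, cchoose m i * W.dmode (V.op u (i : ℤ) v) (m + n - (i : ℤ)) α w) := by
  intro α hα
  obtain ⟨φ, rfl⟩ : ∃ φ : Module.Dual ℂ W.carrier, ⇑φ = α := ⟨hα.mk' α, rfl⟩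
  refine ⟨fun v n => ?_, fun u v c n w => ⟨?_, ?_⟩, fun v n w => ?_, fun u v m n w => ?_⟩
  · rw [W.dmode_eq_comp_adjointMode]
    exact (φ ∘ₗ W.adjointMode n v).isLinear
  · simp only [W.dmode_eq_comp_adjointMode, map_add, LinearMap.comp_add, LinearMap.add_apply]
  · simp [W.dmode_eq_comp_adjointMode]
  · simp [W.dmode_eq_comp_adjointMode, W.adjointMode_L_neg_one]
  · let evalAt : Module.End ℂ W.carrier →ₗ[ℂ] ℂ := φ ∘ₗ LinearMap.applyₗ w
    have h := congr(evalAt $(W.adjointMode_bracket u v m n))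
    rw [map_finsum evalAt (W.hasFiniteSupport_cchoose_smul_adjointMode u v m n), map_sub] at h
    simp only [map_smul, smul_eq_mul] at h
    simp only [W.dmode_eq_comp_adjointMode]
    exact h
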